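/- Let [a,b] be a nondegenerate compact interval. The family 𝒜ℳ𝒲 is maximal dense-lineable in c₀(C([a,b])): there exists a linear subspace E of c₀(C([a,b])) that is dense with respect to the norm ‖(fₙ)ₙ‖ = supₙ ‖fₙ‖∞, has dimension equal to the cardinality of the continuum 𝔠, and satisfies E \ {0} ⊂ 𝒜ℳ𝒲. -/

import Mathlib

open Filter Topology ZeroAtInfty

/-- Anti M-Weierstrass sequences. -/
def AntiMW (a b : ℝ) (f : ℕ → C(Set.Icc a b, ℝ)) : Prop :=
  (∀ x : Set.Icc a b, Summable fun n => |f n x|) ∧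
  (∃ S : Set.Icc a b → ℝ,
    TendstoUniformly (fun N x => ∑ n ∈ Finset.range N, f n x) S atTop) ∧
  ¬ Summable fun n => ‖f n‖

/-!
Let `D` be the dense subspace of finitely supported sequences in `c₀(C(X))`. Adding an element of
`D` does not affect the Anti M-Weierstrass property. Hence it suffices to find a subspace `M` of
dimension `𝔠 ≥ #D` whose nonzero elements are Anti M-Weierstrass: a basis of `M`, rescaled to be
small and translated by the elements of `D`, spans a dense subspace of the same kind.

To find `M`, take `φₙ` of norm one with pairwise disjoint supports. For every null sequence `γ`
outside `ℓ¹` the sequence `(γₙ φₙ)` is Anti M-Weierstrass, and the sequences `(n⁻ˢ)`, `0 < s < 1`,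
span a subspace of `c₀` of dimension `𝔠` which meets `ℓ¹` only in `0`, because a nontrivial linear
combination is asymptotic to a multiple of the term with the smallest exponent.
-/

open Asymptotics Cardinal Function Module Set

section DenseLineability

variable {𝕜 V : Type*} [NontriviallyNormedField 𝕜] [AddCommGroup V] [Module 𝕜 V]
  [TopologicalSpace V] [ContinuousSMul 𝕜 V]

lemma exists_basis_mem_of_mem_nhds_zero {ι : Type*} {M : Submodule 𝕜 V} (b : Basis ι 𝕜 M)
    {U : ι → Set V} (hU : ∀ i, U i ∈ 𝓝 0) :
    ∃ b' : Basis ι 𝕜 M, ∀ i, (b' i : V) ∈ U i := by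
  have exists_smul_mem (i : ι) : ∃ c : 𝕜, c • (b i : V) ∈ U i ∧ c ≠ 0 := by
    have tendsto_smul : Tendsto (fun c : 𝕜 => c • (b i : V)) (𝓝[≠] 0) (𝓝 0) :=
      ((continuous_id.smul continuous_const).tendsto' 0 0 (zero_smul _ _)).mono_left
        nhdsWithin_le_nhds
    exact ((tendsto_smul.eventually_mem (hU i)).and self_mem_nhdsWithin).exists
  choose c hcU hc using exists_smul_mem
  exact ⟨b.isUnitSMul fun i => (hc i).isUnit, fun i => by
    simpa only [Basis.isUnitSMul_apply, Submodule.coe_smul] using hcU i⟩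

lemma exists_linearMap_denseRange_subtype_add [ContinuousAdd V] [FirstCountableTopology V]
    {D M : Submodule 𝕜 V} (hD : Dense (D : Set V)) (hM : ℵ₀ ≤ Module.rank 𝕜 M)
    (hDM : #D ≤ Module.rank 𝕜 M) :
    ∃ R : M →ₗ[𝕜] D, DenseRange (M.subtype + D.subtype ∘ₗ R) := by
  obtain ⟨U, hU⟩ := (𝓝 (0 : V)).exists_antitone_basis
  let b := Basis.ofVectorSpace 𝕜 M
  obtain ⟨g, hg⟩ : ∃ g : Basis.ofVectorSpaceIndex 𝕜 M → D × ℕ, Surjective g := by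
    have card_le : #(D × ℕ) ≤ #(Basis.ofVectorSpaceIndex 𝕜 M) := by
      rw [b.mk_eq_rank'', mk_prod, lift_uzero, mk_nat, lift_aleph0]
      exact mul_le_of_le hM hDM hM
    exact ⟨invFun card_le.some, invFun_surjective card_le.some.injective⟩
  obtain ⟨b', hb'⟩ :=
    exists_basis_mem_of_mem_nhds_zero b fun i => hU.mem (g i).2
  let R : M →ₗ[𝕜] D := b'.constr 𝕜 fun i => (g i).1
  refine ⟨R, dense_iff_inter_open.2 fun O hO hne => ?_⟩
  obtain ⟨d, hdO, hdD⟩ := hD.inter_open_nonempty O hO hne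
  have translate_mem : (· + d) ⁻¹' O ∈ 𝓝 (0 : V) :=
    (hO.preimage (continuous_add_const d)).mem_nhds (by simpa using hdO)
  obtain ⟨n, hn⟩ := hU.mem_iff.1 translate_mem
  obtain ⟨i, hi⟩ := hg (⟨d, hdD⟩, n)
  have hbi : (b' i : V) ∈ U n := by simpa [hi] using hb' i
  exact ⟨_, by simpa [R, b'.constr_basis, hi] using hn hbi, b' i, rfl⟩

theorem exists_dense_submodule_rank_eq [ContinuousAdd V] [FirstCountableTopology V]
    {A : Set V} {D M : Submodule 𝕜 V} (hA₀ : 0 ∉ A) (hAD : ∀ x ∈ A, ∀ d ∈ D, x + d ∈ A)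
    (hD : Dense (D : Set V)) (hMA : ∀ x ∈ M, x ≠ 0 → x ∈ A)
    (hM : ℵ₀ ≤ Module.rank 𝕜 M) (hDM : #D ≤ Module.rank 𝕜 M) :
    ∃ E : Submodule 𝕜 V, Dense (E : Set V) ∧ Module.rank 𝕜 E = Module.rank 𝕜 M ∧
      ∀ x ∈ E, x ≠ 0 → x ∈ A := by
  obtain ⟨R, hR⟩ := exists_linearMap_denseRange_subtype_add hD hM hDM
  set T : M →ₗ[𝕜] V := M.subtype + D.subtype ∘ₗ R
  have mem_of_ne_zero (x : M) (hx : x ≠ 0) : T x ∈ A :=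
    hAD x (hMA x x.2 (by simpa using hx)) _ (R x).2
  have T_injective : Injective T := by
    refine (injective_iff_map_eq_zero T).2 fun x hTx => ?_
    by_contra hx
    exact hA₀ (hTx ▸ mem_of_ne_zero x hx)
  refine ⟨LinearMap.range T, hR, rank_range_of_injective T T_injective, ?_⟩
  rintro _ ⟨x, rfl⟩ hTx
  exact mem_of_ne_zero x (by rintro rfl; exact hTx (map_zero T))

end DenseLineability

section NullFamilies

variable {α : Type*} [TopologicalSpace α] [DiscreteTopology α]

lemma zeroAtInfty_tendsto_cofinite {V : Type*} [TopologicalSpace V] [Zero V] (F : C₀(α, V)) :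
    Tendsto F cofinite (𝓝 0) :=
  cocompact_eq_cofinite α ▸ zero_at_infty F

/-- The element of `c₀(α, V)`, encoded as `C₀(α, V)` for discrete `α`, given by a family that tends
to zero. -/
def nullFamily {V : Type*} [TopologicalSpace V] [Zero V] (f : α → V)
    (hf : Tendsto f cofinite (𝓝 0)) : C₀(α, V) where
  toFun := f
  continuous_toFun := continuous_of_discreteTopology
  zero_at_infty' := by rwa [cocompact_eq_cofinite]

variable {𝕜 V : Type*} [NormedField 𝕜] [NormedAddCommGroup V] [NormedSpace 𝕜 V]

variable (α 𝕜 V) in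
/-- The subspace `c₀₀(α, V)` of finitely supported families in `c₀(α, V)`. -/
def finitelySupported : Submodule 𝕜 C₀(α, V) where
  carrier := {F | F =ᶠ[cofinite] 0}
  zero_mem' := show (0 : α → V) =ᶠ[cofinite] 0 from EventuallyEq.rfl
  add_mem' {F G} (hF : F =ᶠ[cofinite] 0) (hG : G =ᶠ[cofinite] 0) := by simpa using hF.add hG
  smul_mem' c F (hF : F =ᶠ[cofinite] 0) := by simpa using hF.const_smul c

lemma dense_finitelySupported : Dense (finitelySupported α 𝕜 V : Set C₀(α, V)) := by
  refine Metric.dense_iff.2 fun F ε hε => ?_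
  let s : Set α := {x | ε / 2 ≤ ‖F x‖}
  have s_finite : s.Finite := by
    simpa [s, eventually_cofinite] using
      (zeroAtInfty_tendsto_cofinite F).norm.eventually_lt_const (by simpa using half_pos hε)
  have truncation_eq_zero : s.indicator F =ᶠ[cofinite] 0 :=
    s_finite.eventually_cofinite_notMem.mono fun x hx => indicator_of_notMem hx _
  let G := nullFamily (s.indicator F) (tendsto_const_nhds.congr' truncation_eq_zero.symm)
  refine ⟨G, ?_, truncation_eq_zero⟩
  have dist_le : dist G F ≤ ε / 2 := by
    rw [← ZeroAtInftyContinuousMap.dist_toBCF_eq_dist,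
      BoundedContinuousFunction.dist_le (half_pos hε).le]
    intro x
    change dist (s.indicator F x) (F x) ≤ ε / 2
    by_cases hx : x ∈ s
    · simpa [hx] using (half_pos hε).le
    · simpa [hx] using (not_le.1 hx).le
  exact dist_le.trans_lt (half_lt_self hε)

/-- The diagonal operator `(γₓ) ↦ (γₓ φₓ)` from `c₀(α, 𝕜)` to `c₀(α, V)` given by unit vectors
`φₓ`. -/
def diagonal (φ : α → V) (hφ : ∀ x, ‖φ x‖ = 1) : C₀(α, 𝕜) →ₗ[𝕜] C₀(α, V) where
  toFun γ := nullFamily (fun x => γ x • φ x) <| by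
    simpa [tendsto_zero_iff_norm_tendsto_zero, norm_smul, hφ] using
      (zeroAtInfty_tendsto_cofinite γ).norm
  map_add' γ δ := ZeroAtInftyContinuousMap.ext fun x => add_smul (γ x) (δ x) (φ x)
  map_smul' c γ := ZeroAtInftyContinuousMap.ext fun x => mul_smul c (γ x) (φ x)

lemma diagonal_apply {φ : α → V} (hφ : ∀ x, ‖φ x‖ = 1) (γ : C₀(α, 𝕜)) (x : α) :
    diagonal φ hφ γ x = γ x • φ x := rfl

lemma norm_diagonal_apply {φ : α → V} (hφ : ∀ x, ‖φ x‖ = 1) (γ : C₀(α, 𝕜)) (x : α) :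
    ‖diagonal φ hφ γ x‖ = ‖γ x‖ := by
  rw [diagonal_apply, norm_smul, hφ, mul_one]

lemma diagonal_injective {φ : α → V} (hφ : ∀ x, ‖φ x‖ = 1) :
    Injective (diagonal φ hφ : C₀(α, 𝕜) →ₗ[𝕜] C₀(α, V)) := by
  refine (injective_iff_map_eq_zero _).2 fun γ hγ => ZeroAtInftyContinuousMap.ext fun x => ?_
  simpa [hγ] using (norm_diagonal_apply hφ γ x).symm

end NullFamilies

section Cardinality

lemma mk_continuousMap_le_continuum {X Y : Type*} [TopologicalSpace X]
    [TopologicalSpace.SeparableSpace X] [TopologicalSpace Y] [T2Space Y] (hY : #Y ≤ 𝔠) :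
    #C(X, Y) ≤ 𝔠 := by
  obtain ⟨s, s_countable, s_dense⟩ := TopologicalSpace.exists_countable_dense X
  have restrict_injective : Injective fun (f : C(X, Y)) (x : s) => f x := fun f g hfg =>
    DFunLike.coe_injective <| s_dense.denseRange_val.equalizer f.continuous g.continuous hfg
  have s_card : #s ≤ ℵ₀ := le_aleph0_iff_set_countable.2 s_countable
  calc #C(X, Y) ≤ #(s → Y) := mk_le_of_injective restrict_injective
    _ = lift #Y ^ lift #s := mk_arrow _ _
    _ ≤ 𝔠 ^ lift #s := power_le_power_right (lift_le_continuum.2 hY)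
    _ ≤ 𝔠 ^ ℵ₀ := power_le_power_left continuum_ne_zero (lift_le_aleph0.2 s_card)
    _ = 𝔠 := continuum_power_aleph0

lemma mk_zeroAtInfty_nat_le_continuum {V : Type*} [TopologicalSpace V] [Zero V] (hV : #V ≤ 𝔠) :
    #C₀(ℕ, V) ≤ 𝔠 :=
  calc #C₀(ℕ, V) ≤ #(ℕ → V) := mk_le_of_injective DFunLike.coe_injective
    _ = #V ^ ℵ₀ := by simp
    _ ≤ 𝔠 ^ ℵ₀ := power_le_power_right hV
    _ = 𝔠 := continuum_power_aleph0

end Cardinality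

theorem exists_dense_submodule_rank_eq_continuum_of_congr_cofinite {𝕜 V : Type*}
    [NontriviallyNormedField 𝕜] [NormedAddCommGroup V] [NormedSpace 𝕜 V]
    {A : Set C₀(ℕ, V)} {M : Submodule 𝕜 C₀(ℕ, V)} (hA₀ : 0 ∉ A)
    (hA : ∀ F ∈ A, ∀ G : C₀(ℕ, V), F =ᶠ[cofinite] G → G ∈ A) (hV : #V ≤ 𝔠)
    (hM : Module.rank 𝕜 M = 𝔠) (hMA : ∀ F ∈ M, F ≠ 0 → F ∈ A) :
    ∃ E : Submodule 𝕜 C₀(ℕ, V), Dense (E : Set C₀(ℕ, V)) ∧ Module.rank 𝕜 E = 𝔠 ∧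
      ∀ F ∈ E, F ≠ 0 → F ∈ A := by
  rw [← hM]
  refine exists_dense_submodule_rank_eq (D := finitelySupported ℕ 𝕜 V) hA₀
    (fun F hF G (hG : G =ᶠ[cofinite] 0) => hA F hF _ ?_) dense_finitelySupported hMA ?_ ?_
  · simpa using (EventuallyEq.refl cofinite F).add hG.symm
  · exact hM ▸ aleph0_le_continuum
  · exact hM ▸ (mk_le_of_injective Subtype.val_injective).trans
      (mk_zeroAtInfty_nat_le_continuum hV)

section PowerSequences

lemma natCast_rpow_neg_isLittleO {s t : ℝ} (hst : s < t) :
    (fun n : ℕ => (n : ℝ) ^ (-t)) =o[atTop] fun n => (n : ℝ) ^ (-s) := by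
  have ratio_tendsto : Tendsto (fun n : ℕ => (n : ℝ) ^ (-(t - s))) atTop (𝓝 0) :=
    (tendsto_rpow_neg_atTop (sub_pos.2 hst)).comp tendsto_natCast_atTop_atTop
  refine isLittleO_of_tendsto' ?_ (ratio_tendsto.congr' ?_) <;>
    filter_upwards [eventually_gt_atTop 0] with n hn
  · intro h
    exact absurd h (by positivity)
  · rw [← Real.rpow_sub (by positivity)]
    ring_nf

variable {ι : Type*} [LinearOrder ι] {p : ι → ℝ}

lemma sum_mul_rpow_neg_isEquivalent (hp : StrictMono p) {c : ι →₀ ℝ} (hc : c.support.Nonempty) :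
    (fun n : ℕ => c.sum fun i r => r * (n : ℝ) ^ (-p i)) ~[atTop]
      fun n => c (c.support.min' hc) * (n : ℝ) ^ (-p (c.support.min' hc)) := by
  set i₀ := c.support.min' hc
  have hi₀ : i₀ ∈ c.support := c.support.min'_mem hc
  have remainder_isLittleO :
      (fun n : ℕ => ∑ i ∈ c.support.erase i₀, c i * (n : ℝ) ^ (-p i)) =o[atTop]
        fun n => c i₀ * (n : ℝ) ^ (-p i₀) := by
    refine (IsLittleO.fun_sum fun i hi => ?_).const_mul_right (Finsupp.mem_support_iff.1 hi₀)
    have hlt : i₀ < i := c.support.min'_lt_of_mem_erase_min' hc hi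
    exact (natCast_rpow_neg_isLittleO (hp hlt)).const_mul_left _
  refine remainder_isLittleO.congr_left fun n => ?_
  rw [Pi.sub_apply, Finsupp.sum, ← Finset.add_sum_erase _ _ hi₀, add_sub_cancel_left]

lemma not_summable_sum_mul_rpow_neg (hp : StrictMono p) (hp₁ : ∀ i, p i ≤ 1) {c : ι →₀ ℝ}
    (hc : c ≠ 0) : ¬ Summable fun n : ℕ => c.sum fun i r => r * (n : ℝ) ^ (-p i) := by
  have hne := Finsupp.support_nonempty_iff.2 hc
  rw [(sum_mul_rpow_neg_isEquivalent hp hne).summable_iff_nat,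
    summable_mul_left_iff (Finsupp.mem_support_iff.1 (c.support.min'_mem hne)),
    Real.summable_nat_rpow, neg_lt_neg_iff, not_lt]
  exact hp₁ _

/-- The null sequence `(n⁻ˢ)ₙ` for `0 < s < 1`; its term at `n = 0` is `0 ^ (-s) = 0`. -/
noncomputable def powerSequence (s : Ioo (0 : ℝ) 1) : C₀(ℕ, ℝ) :=
  nullFamily (fun n => (n : ℝ) ^ (-(s : ℝ))) <| by
    rw [Nat.cofinite_eq_atTop]
    exact (tendsto_rpow_neg_atTop s.2.1).comp tendsto_natCast_atTop_atTop

lemma linearCombination_powerSequence_apply (c : Ioo (0 : ℝ) 1 →₀ ℝ) (n : ℕ) :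
    Finsupp.linearCombination ℝ powerSequence c n = c.sum fun s r => r * (n : ℝ) ^ (-(s : ℝ)) := by
  let eval : C₀(ℕ, ℝ) →ₗ[ℝ] ℝ :=
    { toFun := fun γ => γ n, map_add' := fun _ _ => rfl, map_smul' := fun _ _ => rfl }
  exact Finsupp.apply_linearCombination ℝ eval powerSequence c

lemma not_summable_linearCombination_powerSequence {c : Ioo (0 : ℝ) 1 →₀ ℝ} (hc : c ≠ 0) :
    ¬ Summable (Finsupp.linearCombination ℝ powerSequence c) := by
  simpa only [← linearCombination_powerSequence_apply] using
    not_summable_sum_mul_rpow_neg (Subtype.strictMono_coe _) (fun s => s.2.2.le) hc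

lemma linearIndependent_powerSequence : LinearIndependent ℝ powerSequence := by
  refine linearIndependent_iff.2 fun c hc => ?_
  by_contra hc₀
  exact not_summable_linearCombination_powerSequence hc₀ (by rw [hc]; exact summable_zero)

theorem exists_submodule_rank_eq_continuum_not_summable :
    ∃ W : Submodule ℝ C₀(ℕ, ℝ), Module.rank ℝ W = 𝔠 ∧ ∀ γ ∈ W, γ ≠ 0 → ¬ Summable γ := by
  refine ⟨Submodule.span ℝ (range powerSequence), ?_, fun γ hγ hγ₀ => ?_⟩
  · rw [rank_span linearIndependent_powerSequence,
      mk_range_eq _ linearIndependent_powerSequence.injective, mk_Ioo_real zero_lt_one]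
  · obtain ⟨c, rfl⟩ := Finsupp.mem_span_range_iff_exists_finsupp.1 hγ
    exact not_summable_linearCombination_powerSequence (by rintro rfl; simp at hγ₀)

end PowerSequences

section DisjointSupports

lemma support_apply_subsingleton {ι X E : Type*} [Zero E] {f : ι → X → E}
    (hf : Pairwise (Disjoint on fun i => support (f i))) (x : X) :
    (support fun i => f i x).Subsingleton := fun i hi j hj => by
  by_contra hij
  exact disjoint_left.1 (hf hij) hi hj

variable {X : Type*} [TopologicalSpace X] [CompactSpace X]

lemma exists_pairwise_disjoint_support_norm_eq_one [T2Space X] [Infinite X] :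
    ∃ φ : ℕ → C(X, ℝ), (∀ n, ‖φ n‖ = 1) ∧ Pairwise (Disjoint on fun n => support (φ n)) := by
  obtain ⟨U, U_infinite, U_open, U_disjoint⟩ := exists_seq_infinite_isOpen_pairwise_disjoint X
  have exists_bump (n : ℕ) : ∃ φ : C(X, ℝ), ‖φ‖ = 1 ∧ support φ ⊆ U n := by
    obtain ⟨x, hx⟩ := (U_infinite n).nonempty
    obtain ⟨φ, φ_zero, φ_one, φ_mem⟩ := exists_continuous_zero_one_of_isClosed
      (U_open n).isClosed_compl isClosed_singleton (disjoint_singleton_right.2 (not_not.2 hx))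
    refine ⟨φ, le_antisymm ((φ.norm_le zero_le_one).2 fun y => ?_) ?_, fun y hy => ?_⟩
    · rw [Real.norm_of_nonneg (φ_mem y).1]
      exact (φ_mem y).2
    · simpa [φ_one rfl] using φ.norm_coe_le_norm x
    · by_contra hyU
      exact hy (φ_zero hyU)
  choose φ φ_norm φ_support using exists_bump
  exact ⟨φ, φ_norm, fun m n hmn => (U_disjoint hmn).mono (φ_support m) (φ_support n)⟩

variable {ι E : Type*} [NormedAddCommGroup E] {f : ι → C(X, E)}

lemma norm_sum_le_of_pairwise_disjoint_support
    (hf : Pairwise (Disjoint on fun i => support (f i))) {t : Finset ι} {C : ℝ} (hC : 0 ≤ C)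
    (hfC : ∀ i ∈ t, ‖f i‖ ≤ C) : ‖∑ i ∈ t, f i‖ ≤ C := by
  refine (ContinuousMap.norm_le _ hC).2 fun x => ?_
  rw [ContinuousMap.sum_apply]
  by_cases h : ∃ i ∈ t, f i x ≠ 0
  · obtain ⟨i, hit, hix⟩ := h
    have only_i (j : ι) (hji : j ≠ i) : f j x = 0 := by
      by_contra hjx
      exact hji (support_apply_subsingleton hf x hjx hix)
    rw [Finset.sum_eq_single_of_mem i hit fun j _ hji => only_i j hji]
    exact ((f i).norm_coe_le_norm x).trans (hfC i hit)
  · push Not at h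
    rwa [Finset.sum_eq_zero h, norm_zero]

lemma summable_of_pairwise_disjoint_support [CompleteSpace E]
    (hf : Pairwise (Disjoint on fun i => support (f i))) (hf₀ : Tendsto f cofinite (𝓝 0)) :
    Summable f := by
  refine summable_iff_vanishing_norm.2 fun ε hε => ?_
  have large_finite : {i | ε / 2 ≤ ‖f i‖}.Finite := by
    simpa [eventually_cofinite] using
      hf₀.norm.eventually_lt_const (by simpa using half_pos hε)
  refine ⟨large_finite.toFinset, fun t ht => ?_⟩
  have small_of_mem (i : ι) (hi : i ∈ t) : ‖f i‖ ≤ ε / 2 := by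
    by_contra hlt
    exact Finset.disjoint_left.1 ht hi (large_finite.mem_toFinset.2 (not_le.1 hlt).le)
  exact (norm_sum_le_of_pairwise_disjoint_support hf (half_pos hε).le small_of_mem).trans_lt
    (half_lt_self hε)

end DisjointSupports

section AntiMWeierstrass

variable {X : Type*} [TopologicalSpace X] [CompactSpace X]

/-- Anti M-Weierstrass sequences of continuous functions on a compact space `X`; for `X = [a, b]`
this is `AntiMW a b`. -/
def IsAntiMWeierstrass (f : ℕ → C(X, ℝ)) : Prop :=
  (∀ x, Summable fun n => |f n x|) ∧
  (∃ S : X → ℝ, TendstoUniformly (fun N x => ∑ n ∈ Finset.range N, f n x) S atTop) ∧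
  ¬ Summable fun n => ‖f n‖

lemma not_isAntiMWeierstrass_zero : ¬ IsAntiMWeierstrass fun _ : ℕ => (0 : C(X, ℝ)) :=
  fun h => h.2.2 (by simp)

lemma IsAntiMWeierstrass.congr {f g : ℕ → C(X, ℝ)} (hf : IsAntiMWeierstrass f)
    (hfg : f =ᶠ[cofinite] g) : IsAntiMWeierstrass g := by
  obtain ⟨f_abs, ⟨S, hS⟩, f_norm⟩ := hf
  refine ⟨fun x => ?_, ?_, fun h => f_norm ?_⟩
  · exact (summable_congr_cofinite (hfg.mono fun n hn => by rw [hn])).1 (f_abs x)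
  · obtain ⟨N, hN⟩ := eventually_atTop.1 (Nat.cofinite_eq_atTop ▸ hfg)
    let shift (x : X) : ℝ := ∑ n ∈ Finset.range N, g n x - ∑ n ∈ Finset.range N, f n x
    refine ⟨S + shift, ?_⟩
    have sum_add_shift : ∀ᶠ K in atTop, ∀ x,
        ∑ n ∈ Finset.range K, f n x + shift x = ∑ n ∈ Finset.range K, g n x := by
      filter_upwards [eventually_ge_atTop N] with K hK x
      have tails_eq : ∑ n ∈ Finset.Ico N K, f n x = ∑ n ∈ Finset.Ico N K, g n x :=
        Finset.sum_congr rfl fun n hn => by rw [hN n (Finset.mem_Ico.1 hn).1]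
      simp only [shift, ← Finset.sum_range_add_sum_Ico _ hK, tails_eq]
      ring
    refine Metric.tendstoUniformly_iff.2 fun ε hε => ?_
    filter_upwards [Metric.tendstoUniformly_iff.1 hS ε hε, sum_add_shift] with K hK hsum x
    rw [← hsum, Pi.add_apply, dist_add_right]
    exact hK x
  · exact (summable_congr_cofinite (hfg.mono fun n hn => by rw [hn])).2 h

lemma isAntiMWeierstrass_of_pairwise_disjoint_support {f : ℕ → C(X, ℝ)}
    (hf : Pairwise (Disjoint on fun n => support (f n))) (hf₀ : Tendsto f cofinite (𝓝 0))
    (hf_norm : ¬ Summable fun n => ‖f n‖) : IsAntiMWeierstrass f := by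
  refine ⟨fun x => ?_, ?_, hf_norm⟩
  · exact (summable_of_hasFiniteSupport (support_apply_subsingleton hf x).finite).abs
  · obtain ⟨S, hS⟩ := summable_of_pairwise_disjoint_support hf hf₀
    refine ⟨S, ?_⟩
    simpa only [ContinuousMap.sum_apply] using
      ContinuousMap.tendsto_iff_tendstoUniformly.1 hS.tendsto_sum_nat

theorem exists_submodule_rank_eq_continuum_isAntiMWeierstrass [T2Space X] [Infinite X] :
    ∃ M : Submodule ℝ C₀(ℕ, C(X, ℝ)), Module.rank ℝ M = 𝔠 ∧
      ∀ F ∈ M, F ≠ 0 → IsAntiMWeierstrass F := by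
  obtain ⟨φ, φ_norm, φ_disjoint⟩ := exists_pairwise_disjoint_support_norm_eq_one (X := X)
  obtain ⟨W, W_rank, hW⟩ := exists_submodule_rank_eq_continuum_not_summable
  refine ⟨W.map (diagonal φ φ_norm), ?_, ?_⟩
  · have := (Submodule.equivMapOfInjective _ (diagonal_injective φ_norm) W).lift_rank_eq
    simpa [W_rank] using this.symm
  · rintro _ ⟨γ, hγ, rfl⟩ hγ₀
    have support_subset (n : ℕ) : support (diagonal φ φ_norm γ n) ⊆ support (φ n) :=
      support_const_smul_subset (γ n) (φ n)
    refine isAntiMWeierstrass_of_pairwise_disjoint_support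
      (fun m n hmn => (φ_disjoint hmn).mono (support_subset m) (support_subset n))
      (zeroAtInfty_tendsto_cofinite _) ?_
    simp only [norm_diagonal_apply, Real.norm_eq_abs, summable_abs_iff]
    exact hW γ hγ (by rintro rfl; exact hγ₀ (map_zero _))

end AntiMWeierstrass

theorem stmt10_general (X : Type*) [TopologicalSpace X] [CompactSpace X] [T2Space X]
    [TopologicalSpace.SeparableSpace X] [Infinite X] :
    ∃ E : Submodule ℝ C₀(ℕ, C(X, ℝ)), Dense (E : Set C₀(ℕ, C(X, ℝ))) ∧ Module.rank ℝ E = 𝔠 ∧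
      ∀ F ∈ E, F ≠ 0 → IsAntiMWeierstrass F := by
  obtain ⟨M, M_rank, hM⟩ := exists_submodule_rank_eq_continuum_isAntiMWeierstrass (X := X)
  exact exists_dense_submodule_rank_eq_continuum_of_congr_cofinite
    (A := {F : C₀(ℕ, C(X, ℝ)) | IsAntiMWeierstrass F}) not_isAntiMWeierstrass_zero
    (fun F hF G hFG => hF.congr hFG) (mk_continuousMap_le_continuum mk_real.le) M_rank hM

/-- 𝒜ℳ𝒲 is maximal dense-lineable in `c₀(C([a,b]))` (here realized as the space
`C₀(ℕ, C([a,b]))` of sequences of continuous functions whose sup norms tend to zero,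
with the norm `‖(fₙ)ₙ‖ = supₙ ‖fₙ‖∞`). -/
theorem stmt10 (a b : ℝ) (hab : a < b) :
    ∃ E : Submodule ℝ C₀(ℕ, C(Set.Icc a b, ℝ)),
      Dense (E : Set C₀(ℕ, C(Set.Icc a b, ℝ))) ∧
      Module.rank ℝ E = Cardinal.continuum ∧
      ∀ F ∈ E, F ≠ 0 → AntiMW a b (fun n => F n) := by
  have : Infinite (Icc a b) := Icc.infinite hab
  exact stmt10_general (Icc a b)
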